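/- Let L be a commutative integral residuated lattice with least element 0 that is involutive: (b ⇨ 0) ⇨ 0 = b for all b ∈ L. For a, b ∈ L write a ⊕ b = (a ⇨ 0) ⇨ b. Then the assignments F ↦ K(L,F) = {(a,b) : a ⊕ b ∈ F} and S ↦ F_S = {a ⊕ b : (a,b) ∈ S} are mutually inverse bijections between the lattice filters of L and the admissible subuniverses of K(L): for every lattice filter F one has F_{K(L,F)} = F, and for every admissible subuniverse S of K(L) the set F_S is a lattice filter of L with K(L, F_S) = S. -/

import Mathlib

/-- A commutative integral residuated lattice. -/
class CIRL (L : Type*) extends Lattice L, CommMonoid L where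
  imp : L → L → L
  resid : ∀ a b c : L, a * b ≤ c ↔ a ≤ imp b c
  le_one : ∀ a : L, a ≤ (1 : L)

namespace CIRL

variable {L : Type*} [CIRL L]

/-- Join in `K(L)`. -/
def kjoin (X Y : L × L) : L × L := (X.1 ⊔ Y.1, X.2 ⊓ Y.2)

/-- Meet in `K(L)`. -/
def kmeet (X Y : L × L) : L × L := (X.1 ⊓ Y.1, X.2 ⊔ Y.2)

/-- Product in `K(L)`. -/
def kmul (X Y : L × L) : L × L := (X.1 * Y.1, imp X.1 Y.2 ⊓ imp Y.1 X.2)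

/-- Implication in `K(L)`. -/
def kimp (X Y : L × L) : L × L := (imp X.1 Y.1 ⊓ imp Y.2 X.2, X.1 * Y.2)

/-- The unit of `K(L)`. -/
def kone : L × L := ((1 : L), (1 : L))

end CIRL

open CIRL

/-- A lattice filter: a nonempty, upward-closed subset closed under binary meet. -/
def IsLatticeFilter {L : Type*} [Lattice L] (F : Set L) : Prop :=
  F.Nonempty ∧ (∀ a b : L, a ∈ F → a ≤ b → b ∈ F) ∧
    (∀ a b : L, a ∈ F → b ∈ F → a ⊓ b ∈ F)

/-- A subuniverse of `K(L)`: contains the unit and is closed under the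
K-expansion operations. -/
def IsSubuniverse {L : Type*} [CIRL L] (S : Set (L × L)) : Prop :=
  kone ∈ S ∧ ∀ X Y : L × L, X ∈ S → Y ∈ S →
    kjoin X Y ∈ S ∧ kmeet X Y ∈ S ∧ kmul X Y ∈ S ∧ kimp X Y ∈ S

/-- An admissible subuniverse of `K(L)`: a subuniverse containing `(a,1)` for
every `a ∈ L`. -/
def IsAdmissible {L : Type*} [CIRL L] (S : Set (L × L)) : Prop :=
  IsSubuniverse S ∧ ∀ a : L, (a, (1 : L)) ∈ S

theorem aux_mono {L : Type*} [CIRL L] {a b : L} (c : L) (h : a ≤ b) : a * c ≤ b * c :=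
  (CIRL.resid _ _ _).2 (h.trans ((CIRL.resid _ _ _).1 le_rfl))

theorem aux_mono2 {L : Type*} [CIRL L] {a b : L} (c : L) (h : a ≤ b) : c * a ≤ c * b := by
  rw [mul_comm c a, mul_comm c b]; exact aux_mono c h

theorem aux_mp {L : Type*} [CIRL L] (a b : L) : CIRL.imp a b * a ≤ b :=
  (CIRL.resid _ _ _).2 le_rfl

theorem aux_neg {L : Type*} [CIRL L] (z a c : L) :
    CIRL.imp (a * c) z * a ≤ CIRL.imp c z := by
  rw [← CIRL.resid, mul_assoc]; exact aux_mp _ _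

theorem aux_anti {L : Type*} [CIRL L] (z : L) {a b : L} (h : a ≤ b) :
    CIRL.imp b z ≤ CIRL.imp a z := by
  rw [← CIRL.resid]; exact (aux_mono2 _ h).trans (aux_mp _ _)

theorem aux_imp_one {L : Type*} [CIRL L] (a : L) : CIRL.imp a (1 : L) = 1 :=
  le_antisymm (CIRL.le_one _) ((CIRL.resid _ _ _).1 (CIRL.le_one _))

theorem aux_one_imp {L : Type*} [CIRL L] (a : L) : CIRL.imp (1 : L) a = a :=
  le_antisymm (by simpa using aux_mp (1 : L) a) ((CIRL.resid _ _ _).1 (by simp))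

theorem aux_comm {L : Type*} [CIRL L] (z : L)
    (hinv : ∀ b : L, CIRL.imp (CIRL.imp b z) z = b) (a b : L) :
    CIRL.imp (CIRL.imp a z) b = CIRL.imp (CIRL.imp b z) a := by
  have key : ∀ a b : L, CIRL.imp (CIRL.imp a z) b ≤ CIRL.imp (CIRL.imp b z) a := by
    intro a b
    rw [← CIRL.resid]
    conv_rhs => rw [← hinv a]
    rw [← CIRL.resid, mul_right_comm]
    exact (aux_mono _ (aux_mp _ _)).trans (by rw [mul_comm]; exact aux_mp _ _)
  exact le_antisymm (key a b) (key b a)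

/-- For an involutive CIRL `L` with least element `0`, the maps
`F ↦ K(L,F) = {(a,b) : a ⊕ b ∈ F}` and `S ↦ F_S = {a ⊕ b : (a,b) ∈ S}` are
mutually inverse bijections between lattice filters of `L` and admissible
subuniverses of `K(L)`. -/
theorem stmt10 {L : Type*} [CIRL L] (z : L) (hz : ∀ a : L, z ≤ a)
    (hinv : ∀ b : L, CIRL.imp (CIRL.imp b z) z = b) :
    let oplus : L → L → L := fun a b => CIRL.imp (CIRL.imp a z) b
    let KF : Set L → Set (L × L) := fun F => {p | oplus p.1 p.2 ∈ F}
    let FS : Set (L × L) → Set L := fun S => {x | ∃ p ∈ S, x = oplus p.1 p.2}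
    (∀ F : Set L, IsLatticeFilter F → IsAdmissible (KF F) ∧ FS (KF F) = F) ∧
    (∀ S : Set (L × L), IsAdmissible S →
      IsLatticeFilter (FS S) ∧ KF (FS S) = S) := by
  intro oplus KF FS
  have ocomm : ∀ a b : L, oplus a b = oplus b a := aux_comm z hinv
  have oz : ∀ a : L, oplus a z = a := hinv
  have o1 : ∀ a : L, oplus a 1 = 1 := fun a => aux_imp_one _
  have le_o : ∀ t a b : L, t ≤ oplus a b ↔ t * CIRL.imp a z ≤ b :=
    fun t a b => (CIRL.resid _ _ _).symm
  have le_o' : ∀ t a b : L, t ≤ oplus a b ↔ t * CIRL.imp b z ≤ a :=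
    fun t a b => by rw [ocomm, le_o]
  constructor
  · rintro F ⟨⟨f, hf⟩, hup, hmeet⟩
    have h1 : (1 : L) ∈ F := hup f 1 hf (CIRL.le_one f)
    refine ⟨⟨⟨?_, ?_⟩, ?_⟩, ?_⟩
    · change oplus 1 1 ∈ F
      rw [o1]; exact h1
    · rintro ⟨a, b⟩ ⟨c, d⟩ hX hY
      change oplus a b ∈ F at hX
      change oplus c d ∈ F at hY
      have ht := hmeet _ _ hX hY
      obtain ⟨t, htd⟩ : ∃ t, t = oplus a b ⊓ oplus c d := ⟨_, rfl⟩
      rw [← htd] at ht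
      have hab : t ≤ oplus a b := htd ▸ inf_le_left
      have hcd : t ≤ oplus c d := htd ▸ inf_le_right
      have e1 := (le_o _ _ _).1 hab
      have e2 := (le_o' _ _ _).1 hab
      have e3 := (le_o _ _ _).1 hcd
      have e4 := (le_o' _ _ _).1 hcd
      refine ⟨hup t _ ht ?_, hup t _ ht ?_, hup t _ ht ?_, hup t _ ht ?_⟩
      · change t ≤ oplus (a ⊔ c) (b ⊓ d)
        rw [le_o]
        exact le_inf ((aux_mono2 _ (aux_anti z le_sup_left)).trans e1)
          ((aux_mono2 _ (aux_anti z le_sup_right)).trans e3)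
      · change t ≤ oplus (a ⊓ c) (b ⊔ d)
        rw [le_o']
        exact le_inf ((aux_mono2 _ (aux_anti z le_sup_left)).trans e2)
          ((aux_mono2 _ (aux_anti z le_sup_right)).trans e4)
      · change t ≤ oplus (a * c) (CIRL.imp a d ⊓ CIRL.imp c b)
        rw [le_o]
        refine le_inf ?_ ?_
        · rw [← CIRL.resid, mul_assoc]
          exact (aux_mono2 _ (aux_neg z a c)).trans e3
        · rw [← CIRL.resid, mul_assoc, mul_comm a c]
          exact (aux_mono2 _ (aux_neg z c a)).trans e1
      · change t ≤ oplus (CIRL.imp a c ⊓ CIRL.imp d b) (a * d)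
        rw [le_o']
        refine le_inf ?_ ?_
        · rw [← CIRL.resid, mul_assoc]
          exact (aux_mono2 _ (aux_neg z a d)).trans e4
        · rw [← CIRL.resid, mul_assoc, mul_comm a d]
          exact (aux_mono2 _ (aux_neg z d a)).trans e1
    · intro a
      change oplus a 1 ∈ F
      rw [o1]; exact h1
    · ext x
      constructor
      · rintro ⟨p, hp, rfl⟩
        exact hp
      · intro hx
        refine ⟨(x, z), ?_, (oz x).symm⟩
        change oplus x z ∈ F
        rw [oz]; exact hx
  · rintro S ⟨⟨hone, hS⟩, hadm⟩
    have fwd : ∀ a b : L, (a, b) ∈ S → (oplus a b, z) ∈ S := by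
      intro a b h
      have := (hS _ _ (hadm (CIRL.imp b z)) h).2.2.2
      simp only [kimp, aux_imp_one] at this
      rw [inf_eq_left.2 (CIRL.le_one _), le_antisymm (aux_mp b z) (hz _)] at this
      rw [ocomm]
      exact this
    have bwd : ∀ a b : L, (oplus a b, z) ∈ S → (a, b) ∈ S := by
      intro a b h
      have h2 := (hS _ _ h (hadm (CIRL.imp b z))).2.2.1
      simp only [kmul, aux_imp_one] at h2
      rw [inf_eq_right.2 (CIRL.le_one _), hinv] at h2
      have h3 := (hS _ _ h2 (hadm a)).1
      simp only [kjoin] at h3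
      rw [inf_eq_left.2 (CIRL.le_one _), sup_eq_right.2 ((le_o' _ _ _).1 le_rfl)] at h3
      exact h3
    have mem : ∀ c : L, c ∈ FS S ↔ (c, z) ∈ S := by
      intro c
      constructor
      · rintro ⟨⟨a, b⟩, hp, rfl⟩
        exact fwd a b hp
      · intro h
        exact ⟨(c, z), h, (oz c).symm⟩
    refine ⟨⟨⟨_, _, hone, rfl⟩, ?_, ?_⟩, ?_⟩
    · intro a b ha hab
      rw [mem] at ha ⊢
      have := (hS _ _ ha (hadm b)).1
      simp only [kjoin] at this
      rwa [inf_eq_left.2 (CIRL.le_one _), sup_eq_right.2 hab] at this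
    · intro a b ha hb
      rw [mem] at ha hb ⊢
      have := (hS _ _ ha hb).2.1
      simpa only [kmeet, sup_idem] using this
    · ext ⟨a, b⟩
      change oplus a b ∈ FS S ↔ _
      rw [mem]
      exact ⟨bwd a b, fwd a b⟩
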